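/- arXiv:1311.6175 — 11 statements merged into one kernel-verified Lean document; each statement's English description precedes it below -/
import Mathlib

section
/- Let n ≥ 2 be an integer and let α be a monotone cofinite partial selfmap of L_n ×_lex ℤ (i.e., α ∈ IO_∞(ℤ^n_lex)). If (i, l) ∈ dom α and α(i, l) = (j, m), then i = j; that is, every element of IO_∞(ℤ^n_lex) preserves the first coordinate. -/
/-- Composition of partial selfmaps (left map applied first):
`dom (PComp f g) = {x ∈ dom f : f x ∈ dom g}` and `(PComp f g) x = g (f x)`. -/
def PComp {X : Type*} (f g : X → Option X) : X → Option X := fun x => (f x).bind g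

/-- The identity partial selfmap (everywhere defined). -/
def PId {X : Type*} : X → Option X := fun x => some x

/-- A partial selfmap is injective. -/
def PInj {X : Type*} (f : X → Option X) : Prop :=
  ∀ ⦃x y a : X⦄, f x = some a → f y = some a → x = y

/-- A partial selfmap is monotone with respect to the relation `r`. -/
def PMono {X : Type*} (r : X → X → Prop) (f : X → Option X) : Prop :=
  ∀ ⦃x y a b : X⦄, r x y → f x = some a → f y = some b → r a b

/-- The domain of a partial selfmap is cofinite. -/
def DomCof {X : Type*} (f : X → Option X) : Prop := {x | f x = none}.Finite

/-- The range (image) of a partial selfmap is cofinite. -/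
def RanCof {X : Type*} (f : X → Option X) : Prop := {y | ∀ x, f x ≠ some y}.Finite

/-- `IOmap r f` says that `f` is a monotone (w.r.t. `r`) injective partial selfmap
with cofinite domain and cofinite image, i.e. an element of `IO_∞`. -/
def IOmap {X : Type*} (r : X → X → Prop) (f : X → Option X) : Prop :=
  PInj f ∧ PMono r f ∧ DomCof f ∧ RanCof f

/-- The lexicographic order on `L_n × ℤ` (with `L_n = Fin n`):
`(i,m) ≤ (j,k)` iff `i < j`, or `i = j` and `m ≤ k`. -/
def lexLe (n : ℕ) (p q : Fin n × ℤ) : Prop :=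
  p.1 < q.1 ∨ (p.1 = q.1 ∧ p.2 ≤ q.2)

/-- The domain of a partial selfmap, as a set. -/
def pdom {X : Type*} (f : X → Option X) : Set X := {x | ∃ y, f x = some y}

/-- The range (image) of a partial selfmap, as a set. -/
def pran {X : Type*} (f : X → Option X) : Set X := {y | ∃ x, f x = some y}

theorem inf_ray {n : ℕ} (i : Fin n) (l : ℤ) : {p : Fin n × ℤ | p.1 = i ∧ l < p.2}.Infinite := by
  have h : ((fun k : ℤ => (i, k)) '' Set.Ioi l).Infinite :=
    (Set.Ioi_infinite l).image (by intro a _ b _ hab; simpa using hab)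
  refine h.mono ?_
  rintro _ ⟨k, hk, rfl⟩
  exact ⟨rfl, hk⟩

theorem fin_seg {n : ℕ} (i : Fin n) (l l' : ℤ) :
    {p : Fin n × ℤ | p.1 = i ∧ l ≤ p.2 ∧ p.2 ≤ l'}.Finite := by
  refine ((Set.finite_Icc l l').image (fun k : ℤ => (i, k))).subset ?_
  rintro ⟨a, k⟩ ⟨rfl, hk⟩
  exact ⟨k, hk, rfl⟩

theorem claim1 {n : ℕ} {f : Fin n × ℤ → Option (Fin n × ℤ)} (hf : IOmap (lexLe n) f)
    {i j j' : Fin n} {l m l' m' : ℤ} (h : f (i, l) = some (j, m))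
    (h' : f (i, l') = some (j', m')) (hj : j < j') : False := by
  obtain ⟨_, hm, _, hr⟩ := hf
  have hfin := ((fin_seg i l l').image f).preimage
    (Set.injOn_of_injective (Option.some_injective (Fin n × ℤ)))
  refine inf_ray j m ((hr.union hfin).subset ?_)
  rintro ⟨a, k⟩ ⟨ha, hk⟩
  simp only at ha hk
  subst ha
  by_cases hx : ∃ x, f x = some (a, k)
  · right
    obtain ⟨⟨b, c⟩, hx⟩ := hx
    refine ⟨(b, c), ?_, hx⟩
    have e1 : ¬ lexLe n (b, c) (i, l) := by
      intro hh
      have := hm hh hx h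
      simp [lexLe] at this
      omega
    have e2 : ¬ lexLe n (i, l') (b, c) := by
      intro hh
      have := hm hh h' hx
      simp [lexLe] at this
      omega
    simp only [lexLe, Set.mem_setOf_eq] at *
    omega
  · left
    exact fun x hh => hx ⟨x, hh⟩

theorem claim2 {n : ℕ} {f : Fin n × ℤ → Option (Fin n × ℤ)} (hf : IOmap (lexLe n) f)
    {i i' j : Fin n} {l m l' m' : ℤ} (h : f (i, l) = some (j, m))
    (h' : f (i', l') = some (j, m')) (hi : i < i') : False := by
  obtain ⟨hinj, hm, hd, _⟩ := hf
  have hfin := ((fin_seg j m m').image some).preimage (f := f) (by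
    rintro x ⟨a, _, ha⟩ y _ hxy
    exact hinj ha.symm (hxy ▸ ha.symm))
  refine inf_ray i l ((hd.union hfin).subset ?_)
  rintro ⟨a, k⟩ ⟨ha, hk⟩
  simp only at ha hk
  subst ha
  rcases hx : f (a, k) with _ | ⟨b, c⟩
  · left; exact hx
  · right
    refine ⟨(b, c), ?_, hx.symm⟩
    have e1 := hm (x := (a, l)) (y := (a, k)) (Or.inr ⟨rfl, hk.le⟩) h hx
    have e2 := hm (x := (a, k)) (y := (i', l')) (Or.inl hi) hx h'
    simp only [lexLe, Set.mem_setOf_eq] at *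
    omega

/-- Every element of `IO_∞(ℤ^n_lex)` (n ≥ 2) preserves the first coordinate. -/
theorem stmt0 (n : ℕ) (hn : 2 ≤ n)
    (f : Fin n × ℤ → Option (Fin n × ℤ)) (hf : IOmap (lexLe n) f)
    (i j : Fin n) (l m : ℤ) (h : f (i, l) = some (j, m)) : i = j := by
  have ht : ∀ a : Fin n, ∃ b : Fin n, ∃ l m : ℤ, f (a, l) = some (b, m) := by
    intro a
    by_contra hc
    refine inf_ray a 0 (hf.2.2.1.subset ?_)
    rintro ⟨a', k⟩ ⟨ha, _⟩
    simp only at ha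
    subst ha
    rcases hx : f (a', k) with _ | ⟨b, c⟩
    · exact hx
    · exact absurd ⟨b, k, c, hx⟩ hc
  choose g gl gm hg using ht
  have hmono : StrictMono g := by
    intro a b hab
    rcases hf.2.1 (Or.inl hab) (hg a) (hg b) with h1 | ⟨h1, _⟩
    · exact h1
    · simp only at h1
      have h2 := hg a
      rw [h1] at h2
      exact (claim2 hf h2 (hg b) hab).elim
  have hgi : g i = i := le_antisymm hmono.apply_le hmono.le_apply
  rcases lt_trichotomy (g i) j with h1 | h1 | h1
  · exact (claim1 hf (hg i) h h1).elim
  · rw [← h1, hgi]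
  · exact (claim1 hf h (hg i) h1).elim
end

section
/- For every positive integer n, any two cofinite subsets of L_n ×_lex ℤ, each equipped with the induced order, are order isomorphic. -/
/-- A cofinite subset of `ℤ` is order isomorphic to `ℤ`. -/
theorem cofinite_int_iso (S : Set ℤ) (hS : Sᶜ.Finite) : Nonempty (S ≃o ℤ) := by
  classical
  have key : ∀ T : Set ℤ, T.Infinite → ∃ m ∈ T, m ∈ S := by
    intro T hT
    by_contra! h
    exact hT (hS.subset h)
  haveI : Nonempty S := by
    obtain ⟨m, -, h⟩ := key Set.univ Set.infinite_univ
    exact ⟨⟨m, h⟩⟩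
  haveI : NoMaxOrder S := ⟨fun a => by
    obtain ⟨m, h1, h⟩ := key (Set.Ioi a.1) (Set.Ioi_infinite _)
    exact ⟨⟨m, h⟩, h1⟩⟩
  haveI : NoMinOrder S := ⟨fun a => by
    obtain ⟨m, h1, h⟩ := key (Set.Iio a.1) (Set.Iio_infinite _)
    exact ⟨⟨m, h⟩, h1⟩⟩
  letI : LocallyFiniteOrder S := LocallyFiniteOrder.ofFiniteIcc fun a b => by
    have h := (Set.finite_Icc a.1 b.1).preimage
      (f := (Subtype.val : S → ℤ)) Subtype.val_injective.injOn
    exact h.subset fun x hx => ⟨hx.1, hx.2⟩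
  letI : SuccOrder S := LinearLocallyFiniteOrder.succOrder S
  letI : PredOrder S := LinearLocallyFiniteOrder.predOrder S
  exact ⟨orderIsoIntOfLinearSuccPredArch⟩

/-- Any two cofinite subsets of `L_n ×_lex ℤ` are order isomorphic. -/
theorem stmt1 (n : ℕ) (hn : 0 < n) (A B : Set (Fin n × ℤ))
    (hA : Aᶜ.Finite) (hB : Bᶜ.Finite) :
    ∃ g : A ≃ B, ∀ x y : A, lexLe n x.1 y.1 ↔ lexLe n (g x).1 (g y).1 := by
  have fib : ∀ C : Set (Fin n × ℤ), Cᶜ.Finite → ∀ i : Fin n,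
      Nonempty ({m : ℤ | (i, m) ∈ C} ≃o ℤ) := by
    intro C hC i
    apply cofinite_int_iso
    exact hC.preimage (f := fun m : ℤ => (i, m)) (fun a _ b _ h => (Prod.ext_iff.1 h).2)
  have full : ∀ C : Set (Fin n × ℤ), Cᶜ.Finite →
      ∃ g : C ≃ (Fin n × ℤ), ∀ x y : C, lexLe n x.1 y.1 ↔ lexLe n (g x) (g y) := by
    intro C hC
    have e := fun i => Classical.choice (fib C hC i)
    refine ⟨⟨fun x => (x.1.1, e x.1.1 ⟨x.1.2, x.2⟩),
      fun p => ⟨(p.1, ((e p.1).symm p.2).1), ((e p.1).symm p.2).2⟩, ?_, ?_⟩, ?_⟩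
    · rintro ⟨⟨i, m⟩, h⟩
      simp
    · rintro ⟨i, m⟩
      simp
    · rintro ⟨⟨i, m⟩, h⟩ ⟨⟨j, k⟩, h'⟩
      simp only [lexLe, Equiv.coe_fn_mk]
      refine or_congr Iff.rfl (and_congr_right fun hij => ?_)
      subst hij
      simp
  obtain ⟨g, hg⟩ := full A hA
  obtain ⟨k, hk⟩ := full B hB
  refine ⟨g.trans k.symm, fun x y => ?_⟩
  rw [hg, hk]
  simp
end

section
/- Let n ≥ 2. For α ∈ IO_∞(ℤ^n_lex) and i ∈ {1,…,n}, let α^i be the partial selfmap of ℤ with dom α^i = {k ∈ ℤ : (i,k) ∈ dom α} and α(i,k) = (i, α^i(k)) (well defined since every element of IO_∞(ℤ^n_lex) preserves the first coordinate); then α^i ∈ IO_∞(ℤ). The map α ↦ (α^1, …, α^n) is a bijection from IO_∞(ℤ^n_lex) onto the n-fold direct product (IO_∞(ℤ))^n and satisfies (α·β)^i = α^i·β^i for all α, β ∈ IO_∞(ℤ^n_lex) and all i; hence IO_∞(ℤ^n_lex) is isomorphic as a semigroup to the direct power (IO_∞(ℤ))^n with coordinatewise composition. -/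
/-- The restriction `α^i` of an element of `IO_∞(ℤ^n_lex)` to the `i`-th line. -/
def restr (n : ℕ) (f : Fin n × ℤ → Option (Fin n × ℤ)) (i : Fin n) : ℤ → Option ℤ :=
  fun k => (f (i, k)).map Prod.snd

theorem line_not_finite {n : ℕ} {S : Set (Fin n × ℤ)} (hS : S.Finite) (j : Fin n) (m : ℤ) :
    ∃ k, m < k ∧ (j, k) ∉ S := by
  by_contra hc
  push Not at hc
  have h1 : ((fun k : ℤ => (j, k)) '' Set.Ioi m) ⊆ S := by
    rintro _ ⟨k, hk, rfl⟩
    exact hc k hk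
  have h2 := (hS.subset h1).of_finite_image (by intro a _ b _ h; simpa using h)
  exact (Set.Ioi_infinite m) h2

theorem lexLe_total' {n : ℕ} (p q : Fin n × ℤ) : lexLe n p q ∨ lexLe n q p := by
  unfold lexLe
  rcases lt_trichotomy p.1 q.1 with h | h | h
  · exact Or.inl (Or.inl h)
  · rcases le_total p.2 q.2 with h' | h'
    · exact Or.inl (Or.inr ⟨h, h'⟩)
    · exact Or.inr (Or.inr ⟨h.symm, h'⟩)
  · exact Or.inr (Or.inl h)

theorem lexLe_antisymm' {n : ℕ} {p q : Fin n × ℤ} (h : lexLe n p q) (h' : lexLe n q p) :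
    p = q := by
  unfold lexLe at h h'
  have h1 : p.1 = q.1 := by
    rcases h with h | h
    · rcases h' with h' | h'
      · exact absurd h (lt_asymm h')
      · exact h'.1.symm
    · exact h.1
  refine Prod.ext h1 ?_
  rw [h1] at h h'
  simp only [lt_self_iff_false, true_and, false_or] at h h'
  exact le_antisymm h h'

theorem reflect {n : ℕ} {f : Fin n × ℤ → Option (Fin n × ℤ)} (hf : IOmap (lexLe n) f)
    {x y a b : Fin n × ℤ} (hx : f x = some a) (hy : f y = some b) (h : lexLe n a b) :
    lexLe n x y := by
  rcases lexLe_total' x y with h1 | h1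
  · exact h1
  · have h2 := hf.2.1 h1 hy hx
    have := lexLe_antisymm' h h2
    subst this
    have := hf.1 hx hy
    subst this
    exact h1

theorem same_line_aux {n : ℕ} {f : Fin n × ℤ → Option (Fin n × ℤ)} (hf : IOmap (lexLe n) f)
    {i : Fin n} {k l : ℤ} {a b : Fin n × ℤ} (hx : f (i, k) = some a) (hy : f (i, l) = some b) :
    ¬ a.1 < b.1 := by
  intro hlt
  have hfin : ((fun t : ℤ => (f (i, t)).getD a) '' Set.Icc k l).Finite :=
    (Set.finite_Icc k l).image _
  obtain ⟨m, hm, hm2⟩ := line_not_finite (hf.2.2.2.union hfin) a.1 a.2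
  apply hm2
  by_cases hr : ∀ x, f x ≠ some (a.1, m)
  · exact Or.inl hr
  · right
    push Not at hr
    obtain ⟨⟨i', t⟩, ht⟩ := hr
    have h1 := reflect hf hx ht (Or.inr ⟨rfl, hm.le⟩)
    have h2 := reflect hf ht hy (Or.inl hlt)
    simp only [lexLe] at h1 h2
    have hi : i = i' := by
      rcases h1 with h1 | h1
      · rcases h2 with h2 | h2
        · exact absurd h1 (lt_asymm h2)
        · exact h2.1.symm
      · exact h1.1
    subst hi
    simp only [lt_self_iff_false, true_and, false_or] at h1 h2
    exact ⟨t, ⟨h1, h2⟩, by simp [ht]⟩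

theorem first_coord {n : ℕ} {f : Fin n × ℤ → Option (Fin n × ℤ)} (hf : IOmap (lexLe n) f)
    {x a : Fin n × ℤ} (hx : f x = some a) : a.1 = x.1 := by
  have hex : ∀ i : Fin n, ∃ p : Fin n × ℤ, ∃ k, f (i, k) = some p := by
    intro i
    obtain ⟨k, _, hk⟩ := line_not_finite hf.2.2.1 i 0
    obtain ⟨p, hp⟩ := Option.ne_none_iff_exists'.1 hk
    exact ⟨p, k, hp⟩
  choose p k hp using hex
  have key : ∀ i t b, f (i, t) = some b → b.1 = (p i).1 := by
    intro i t b hb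
    exact le_antisymm (not_lt.1 (same_line_aux hf (hp i) hb))
      (not_lt.1 (same_line_aux hf hb (hp i)))
  have hsurj : Function.Surjective (fun i => (p i).1) := by
    intro j
    obtain ⟨m, _, hm⟩ := line_not_finite hf.2.2.2 j 0
    simp only [Set.mem_ofPred_eq, not_forall, not_not] at hm
    obtain ⟨⟨i, t⟩, ht⟩ := hm
    exact ⟨i, (key i t _ ht).symm⟩
  have hmono : Monotone (fun i => (p i).1) := by
    intro i i' h
    rcases h.eq_or_lt with h | h
    · subst h; exact le_rfl
    · rcases hf.2.1 (Or.inl h : lexLe n (i, k i) (i', k i')) (hp i) (hp i') with h | h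
      · exact h.le
      · exact h.1.le
  have hs := hmono.strictMono_of_injective (Finite.injective_iff_surjective.2 hsurj)
  have hid : (fun i => (p i).1) = id :=
    (StrictMono.range_inj hs strictMono_id).1 (by rw [hsurj.range_eq, Set.range_id])
  rw [key x.1 x.2 a hx]
  exact congrFun hid x.1

theorem restr_some {n : ℕ} {f : Fin n × ℤ → Option (Fin n × ℤ)} (hf : IOmap (lexLe n) f)
    {i : Fin n} {k m : ℤ} : restr n f i k = some m ↔ f (i, k) = some (i, m) := by
  unfold restr
  constructor
  · intro h
    obtain ⟨a, ha, rfl⟩ := Option.map_eq_some_iff.1 h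
    have h1 : a.1 = i := first_coord hf ha
    rw [ha, ← h1]
  · intro h
    simp [h]

/-- `IO_∞(ℤ^n_lex)` is isomorphic as a semigroup to the direct power `(IO_∞(ℤ))^n`:
the map `α ↦ (α^1, …, α^n)` takes values in `(IO_∞(ℤ))^n`, is injective, surjective
onto `(IO_∞(ℤ))^n`, and satisfies `(α·β)^i = α^i·β^i`. -/
theorem stmt2 (n : ℕ) (hn : 2 ≤ n) :
    (∀ f, IOmap (lexLe n) f → ∀ i, IOmap (· ≤ · : ℤ → ℤ → Prop) (restr n f i)) ∧
    (∀ f g, IOmap (lexLe n) f → IOmap (lexLe n) g →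
      (∀ i, restr n f i = restr n g i) → f = g) ∧
    (∀ F : Fin n → ℤ → Option ℤ, (∀ i, IOmap (· ≤ · : ℤ → ℤ → Prop) (F i)) →
      ∃ f, IOmap (lexLe n) f ∧ ∀ i, restr n f i = F i) ∧
    (∀ f g, IOmap (lexLe n) f → IOmap (lexLe n) g →
      ∀ i, restr n (PComp f g) i = PComp (restr n f i) (restr n g i)) := by
  refine ⟨?_, ?_, ?_, ?_⟩
  · intro f hf i
    refine ⟨?_, ?_, ?_, ?_⟩
    · intro x y a hx hy
      have := hf.1 ((restr_some hf).1 hx) ((restr_some hf).1 hy)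
      simpa using this
    · intro x y a b hxy hx hy
      have := hf.2.1 (Or.inr ⟨rfl, hxy⟩ : lexLe n (i, x) (i, y)) ((restr_some hf).1 hx) ((restr_some hf).1 hy)
      simpa [lexLe] using this
    · have := hf.2.2.1.preimage (f := fun k : ℤ => (i, k)) (by intro a _ b _ h; simpa using h)
      refine this.subset ?_
      intro k hk
      simpa [restr] using hk
    · have := hf.2.2.2.preimage (f := fun k : ℤ => (i, k)) (by intro a _ b _ h; simpa using h)
      refine this.subset ?_
      intro k hk x hx
      have h1 : i = x.1 := first_coord hf hx
      subst h1
      exact hk x.2 ((restr_some hf).2 hx)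
  · intro f g hf hg h
    funext x
    obtain ⟨i, k⟩ := x
    ext a
    have hk := congrFun (h i) k
    constructor
    · intro ha
      have h1 : a.1 = i := first_coord hf ha
      subst h1
      have h2 := (restr_some hf).2 ha
      rw [hk] at h2
      exact (restr_some hg).1 h2
    · intro ha
      have h1 : a.1 = i := first_coord hg ha
      subst h1
      have h2 := (restr_some hg).2 ha
      rw [← hk] at h2
      exact (restr_some hf).1 h2
  · intro F hF
    have hs : ∀ x a : Fin n × ℤ, (F x.1 x.2).map (fun m => (x.1, m)) = some a ↔
        F x.1 x.2 = some a.2 ∧ x.1 = a.1 := by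
      rintro ⟨i, k⟩ ⟨j, m⟩
      simp only [Option.map_eq_some_iff, Prod.mk.injEq]
      constructor
      · rintro ⟨c, hc, rfl, rfl⟩
        exact ⟨hc, rfl⟩
      · rintro ⟨hc, rfl⟩
        exact ⟨m, hc, rfl, rfl⟩
    refine ⟨fun x => (F x.1 x.2).map (fun m => (x.1, m)), ⟨?_, ?_, ?_, ?_⟩, ?_⟩
    · rintro ⟨i, k⟩ ⟨j, l⟩ ⟨u, v⟩ hx hy
      obtain ⟨h1, h2⟩ := (hs _ _).1 hx
      obtain ⟨h3, h4⟩ := (hs _ _).1 hy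
      simp only at h1 h2 h3 h4
      subst h2 h4
      rw [(hF _).1 h1 h3]
    · rintro ⟨i, k⟩ ⟨j, l⟩ ⟨u, v⟩ ⟨u', v'⟩ hxy hx hy
      obtain ⟨h1, h2⟩ := (hs _ _).1 hx
      obtain ⟨h3, h4⟩ := (hs _ _).1 hy
      simp only at h1 h2 h3 h4
      subst h2 h4
      rcases hxy with h | ⟨h, h'⟩
      · exact Or.inl h
      · simp only at h h'
        subst h
        exact Or.inr ⟨rfl, (hF _).2.1 h' h1 h3⟩
    · refine (Set.finite_iUnion (fun i => ((hF i).2.2.1.image (fun k => (i, k))))).subset ?_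
      rintro ⟨i, k⟩ hk
      exact Set.mem_iUnion.2 ⟨i, k, by simpa using hk, rfl⟩
    · refine (Set.finite_iUnion (fun i => ((hF i).2.2.2.image (fun k => (i, k))))).subset ?_
      rintro ⟨i, k⟩ hk
      exact Set.mem_iUnion.2 ⟨i, k, fun x hx => hk (i, x) ((hs _ _).2 ⟨hx, rfl⟩), rfl⟩
    · intro i
      funext k
      simp [restr, Function.comp_def]
  · intro f g hf hg i
    funext k
    unfold PComp
    rcases h : f (i, k) with _ | ⟨j, m⟩
    · simp [restr, h]
    · have h1 : j = i := first_coord hf h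
      subst h1
      simp [restr, h]
end

section
/- Let n be a positive integer and α, β ∈ IO_∞(ℤ^n_lex). Then: (a) there exist χ, χ' ∈ IO_∞(ℤ^n_lex) with α·χ = β and β·χ' = α if and only if dom α = dom β; (b) there exist χ, χ' ∈ IO_∞(ℤ^n_lex) with χ·α = β and χ'·β = α if and only if ran α = ran β. (These characterize Green's relations R and L on the monoid IO_∞(ℤ^n_lex): α R β iff dom α = dom β, and α L β iff ran α = ran β; consequently α H β iff dom α = dom β and ran α = ran β.) -/
theorem exists_pinv {n : ℕ} {f : Fin n × ℤ → Option (Fin n × ℤ)} (hf : IOmap (lexLe n) f) :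
    ∃ h, IOmap (lexLe n) h ∧ ∀ x y, h y = some x ↔ f x = some y := by
  classical
  obtain ⟨h1, h2, h3, h4⟩ := hf
  let h : Fin n × ℤ → Option (Fin n × ℤ) := fun y =>
    if H : ∃ x, f x = some y then some H.choose else none
  have key : ∀ x y, h y = some x ↔ f x = some y := by
    intro x y
    by_cases H : ∃ x, f x = some y
    · simp only [h, dif_pos H, Option.some.injEq]
      constructor
      · rintro rfl
        exact H.choose_spec
      · intro hx
        exact h1 H.choose_spec hx
    · simp only [h, dif_neg H]
      constructor
      · intro h0
        cases h0
      · intro hx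
        exact absurd ⟨x, hx⟩ H
  refine ⟨h, ⟨?_, ?_, ?_, ?_⟩, key⟩
  · intro x y a hx hy
    rw [key] at hx hy
    rw [hx] at hy
    exact Option.some.inj hy
  · intro a b x y hab hx hy
    rw [key] at hx hy
    have tot : lexLe n x y ∨ lexLe n y x := by
      unfold lexLe
      rcases lt_trichotomy x.1 y.1 with h | h | h
      · exact Or.inl (Or.inl h)
      · rcases le_total x.2 y.2 with h' | h'
        · exact Or.inl (Or.inr ⟨h, h'⟩)
        · exact Or.inr (Or.inr ⟨h.symm, h'⟩)
      · exact Or.inr (Or.inl h)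
    rcases tot with h | h
    · exact h
    · have hba := h2 h hy hx
      have : a = b := by
        unfold lexLe at hab hba
        rcases hab with h | ⟨h, h'⟩ <;> rcases hba with k | ⟨k, k'⟩
        · exact absurd h (lt_asymm k)
        · exact absurd h (by rw [k]; exact lt_irrefl _)
        · exact absurd k (by rw [h]; exact lt_irrefl _)
        · exact Prod.ext h (le_antisymm h' k')
      subst this
      have : x = y := h1 hx hy
      subst this
      exact h
  · refine h4.subset ?_
    intro y hy x hx
    rw [← key] at hx
    rw [Set.mem_setOf_eq, hx] at hy
    cases hy
  · refine h3.subset ?_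
    intro x hx
    rw [Set.mem_setOf_eq] at hx ⊢
    cases hfx : f x with
    | none => rfl
    | some y => exact absurd ((key x y).2 hfx) (hx y)

theorem pcomp_some {X : Type*} {f g : X → Option X} {x z : X} :
    PComp f g x = some z ↔ ∃ y, f x = some y ∧ g y = some z := by
  simp [PComp, Option.bind_eq_some_iff]

theorem IOmap_comp {X : Type*} {r : X → X → Prop} {f g : X → Option X} (hf : IOmap r f)
    (hg : IOmap r g) : IOmap r (PComp f g) := by
  obtain ⟨h1, h2, h3, h4⟩ := hf
  obtain ⟨k1, k2, k3, k4⟩ := hg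
  refine ⟨?_, ?_, ?_, ?_⟩
  · intro x y a hx hy
    obtain ⟨u, hu, hu'⟩ := pcomp_some.1 hx
    obtain ⟨v, hv, hv'⟩ := pcomp_some.1 hy
    obtain rfl := k1 hu' hv'
    exact h1 hu hv
  · intro x y a b hr hx hy
    obtain ⟨u, hu, hu'⟩ := pcomp_some.1 hx
    obtain ⟨v, hv, hv'⟩ := pcomp_some.1 hy
    exact k2 (h2 hr hu hv) hu' hv'
  · have fin : (f ⁻¹' (some '' {y | g y = none})).Finite := by
      refine (Set.Finite.image some k3).preimage ?_
      rintro x ⟨u, -, hu⟩ y ⟨v, -, hv⟩ hxy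
      exact h1 hu.symm (hxy.symm.trans hu.symm)
    refine (h3.union fin).subset ?_
    intro x hx
    cases hfx : f x with
    | none => exact Or.inl hfx
    | some y =>
      refine Or.inr ⟨y, ?_, hfx.symm⟩
      simpa [PComp, hfx] using hx
  · have fin : (some ⁻¹' (g '' {y | ∀ x, f x ≠ some y})).Finite :=
      (Set.Finite.image g h4).preimage (Option.some_injective X).injOn
    refine (k4.union fin).subset ?_
    intro z hz
    by_cases H : ∃ y, g y = some z
    · obtain ⟨y, hy⟩ := H
      exact Or.inr ⟨y, fun x hx => hz x (pcomp_some.2 ⟨y, hx, hy⟩), hy⟩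
    · exact Or.inl fun y hy => H ⟨y, hy⟩

theorem pdom_pcomp_subset {X : Type*} (f g : X → Option X) : pdom (PComp f g) ⊆ pdom f := by
  rintro x ⟨z, hz⟩
  obtain ⟨y, hy, -⟩ := pcomp_some.1 hz
  exact ⟨y, hy⟩

theorem pran_pcomp_subset {X : Type*} (f g : X → Option X) : pran (PComp f g) ⊆ pran g := by
  rintro z ⟨x, hz⟩
  obtain ⟨y, -, hy⟩ := pcomp_some.1 hz
  exact ⟨y, hy⟩

theorem right_div {n : ℕ} {f g : Fin n × ℤ → Option (Fin n × ℤ)}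
    (hf : IOmap (lexLe n) f) (hg : IOmap (lexLe n) g) (h : pdom g ⊆ pdom f) :
    ∃ χ, IOmap (lexLe n) χ ∧ PComp f χ = g := by
  obtain ⟨k, hk, key⟩ := exists_pinv hf
  refine ⟨PComp k g, IOmap_comp hk hg, ?_⟩
  funext x
  apply Option.ext
  intro z
  simp only [pcomp_some, key]
  constructor
  · rintro ⟨y, hy, x', hx', hz⟩
    rwa [hf.1 hy hx']
  · intro hz
    obtain ⟨y, hy⟩ := h ⟨z, hz⟩
    exact ⟨y, hy, x, hy, hz⟩

theorem left_div {n : ℕ} {f g : Fin n × ℤ → Option (Fin n × ℤ)}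
    (hf : IOmap (lexLe n) f) (hg : IOmap (lexLe n) g) (h : pran g ⊆ pran f) :
    ∃ χ, IOmap (lexLe n) χ ∧ PComp χ f = g := by
  obtain ⟨k, hk, key⟩ := exists_pinv hf
  refine ⟨PComp g k, IOmap_comp hg hk, ?_⟩
  funext x
  apply Option.ext
  intro z
  simp only [pcomp_some, key]
  constructor
  · rintro ⟨y, ⟨w, hw, hy⟩, hz⟩
    rw [hw, ← hy, hz]
  · intro hz
    obtain ⟨y, hy⟩ := h ⟨x, hz⟩
    exact ⟨y, ⟨z, hz, hy⟩, hy⟩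

/-- Green's relations `R` and `L` on `IO_∞(ℤ^n_lex)`: two elements are mutually right
divisible iff they have the same domain, and mutually left divisible iff they have the
same range (hence `α H β` iff `dom α = dom β` and `ran α = ran β`). -/
theorem stmt5 (n : ℕ) (hn : 0 < n) (f g : Fin n × ℤ → Option (Fin n × ℤ))
    (hf : IOmap (lexLe n) f) (hg : IOmap (lexLe n) g) :
    ((∃ χ χ', IOmap (lexLe n) χ ∧ IOmap (lexLe n) χ' ∧ PComp f χ = g ∧ PComp g χ' = f)
       ↔ pdom f = pdom g) ∧
    ((∃ χ χ', IOmap (lexLe n) χ ∧ IOmap (lexLe n) χ' ∧ PComp χ f = g ∧ PComp χ' g = f)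
       ↔ pran f = pran g) := by
  constructor
  · constructor
    · rintro ⟨χ, χ', -, -, h, h'⟩
      apply Set.Subset.antisymm
      · conv_lhs => rw [← h']
        exact pdom_pcomp_subset g χ'
      · conv_lhs => rw [← h]
        exact pdom_pcomp_subset f χ
    · intro h
      obtain ⟨χ, h1, h2⟩ := right_div hf hg h.ge
      obtain ⟨χ', h3, h4⟩ := right_div hg hf h.le
      exact ⟨χ, χ', h1, h3, h2, h4⟩
  · constructor
    · rintro ⟨χ, χ', -, -, h, h'⟩
      apply Set.Subset.antisymm
      · conv_lhs => rw [← h']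
        exact pran_pcomp_subset χ' g
      · conv_lhs => rw [← h]
        exact pran_pcomp_subset χ f
    · intro h
      obtain ⟨χ, h1, h2⟩ := left_div hf hg h.ge
      obtain ⟨χ', h3, h4⟩ := left_div hg hf h.le
      exact ⟨χ, χ', h1, h3, h2, h4⟩
end

section
/- Let n be a positive integer and let α be an injective monotone partial selfmap of L_n ×_lex ℤ all of whose values preserve the first coordinate (write α(i,k) = (i, α^i(k)) when (i,k) ∈ dom α). Then α has cofinite domain and cofinite image (i.e., α ∈ IO_∞(ℤ^n_lex)) if and only if there exist integers d_α and u_α such that for every i ∈ {1,…,n}: for all integers k ≤ d_α, both (i,k−1) and (i,k) lie in dom α and α^i(k−1) = α^i(k) − 1, and for all integers l ≥ u_α, both (i,l) and (i,l+1) lie in dom α and α^i(l+1) = α^i(l) + 1. Moreover, α is a unit of IO_∞(ℤ^n_lex) (dom α = ran α = L_n × ℤ) if and only if for every i ∈ {1,…,n} and every integer m, (i,m) ∈ dom α and α^i(m+1) = α^i(m) + 1. -/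
/-- On the upper end of a line the map is a translation. -/
theorem line_up {n : ℕ} (f : Fin n × ℤ → Option (Fin n × ℤ)) (i : Fin n) (u : ℤ)
    (h : ∀ l : ℤ, u ≤ l →
      ∃ a b : ℤ, f (i, l) = some (i, a) ∧ f (i, l + 1) = some (i, b) ∧ b = a + 1) :
    ∃ a : ℤ, ∀ t : ℕ, f (i, u + t) = some (i, a + t) := by
  obtain ⟨a, b, h1, -, -⟩ := h u le_rfl
  refine ⟨a, fun t => ?_⟩
  induction t with
  | zero => simpa using h1
  | succ t ih =>
    obtain ⟨a', b', h1, h2, h3⟩ := h (u + t) (by omega)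
    rw [ih] at h1
    have e : a + t = a' := by simpa using h1
    have e1 : u + ((t + 1 : ℕ) : ℤ) = u + t + 1 := by push_cast; ring
    have e2 : a + ((t + 1 : ℕ) : ℤ) = b' := by push_cast; omega
    rw [e1, e2, h2]

/-- On the lower end of a line the map is a translation. -/
theorem line_down {n : ℕ} (f : Fin n × ℤ → Option (Fin n × ℤ)) (i : Fin n) (d : ℤ)
    (h : ∀ k : ℤ, k ≤ d →
      ∃ a b : ℤ, f (i, k - 1) = some (i, a) ∧ f (i, k) = some (i, b) ∧ a = b - 1) :
    ∃ a : ℤ, ∀ t : ℕ, f (i, d - t) = some (i, a - t) := by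
  obtain ⟨a, b, -, h1, -⟩ := h d le_rfl
  refine ⟨b, fun t => ?_⟩
  induction t with
  | zero => simpa using h1
  | succ t ih =>
    obtain ⟨a', b', h1, h2, h3⟩ := h (d - t) (by omega)
    rw [ih] at h2
    have e : b - t = b' := by simpa using h2
    have e1 : d - ((t + 1 : ℕ) : ℤ) = d - t - 1 := by push_cast; ring
    have e2 : b - ((t + 1 : ℕ) : ℤ) = a' := by push_cast; omega
    rw [e1, e2, h1]

/-- Where the map fails to be a local translation, something is missing. -/
theorem gap {n : ℕ} (f : Fin n × ℤ → Option (Fin n × ℤ))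
    (hinj : PInj f) (hmono : PMono (lexLe n) f)
    (hpres : ∀ (i j : Fin n) (k m : ℤ), f (i, k) = some (j, m) → j = i)
    (i : Fin n) (l : ℤ)
    (hbad : ¬ ∃ a b : ℤ, f (i, l) = some (i, a) ∧ f (i, l + 1) = some (i, b) ∧ b = a + 1) :
    f (i, l) = none ∨ f (i, l + 1) = none ∨
      ∃ a : ℤ, f (i, l) = some (i, a) ∧ ∀ x, f x ≠ some (i, a + 1) := by
  rcases h1 : f (i, l) with _ | ⟨j, a⟩
  · simp
  rcases h2 : f (i, l + 1) with _ | ⟨j', b⟩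
  · simp
  obtain rfl := hpres _ _ _ _ h1
  obtain rfl := hpres _ _ _ _ h2
  right; right
  refine ⟨a, rfl, ?_⟩
  rintro ⟨i, m⟩ hm
  obtain rfl := hpres _ _ _ _ hm
  have hle : ∀ {p q c e : ℤ}, p ≤ q → f (j', p) = some (j', c) → f (j', q) = some (j', e) →
      c ≤ e := by
    intro p q c e hpq hp hq
    have := hmono (x := (j', p)) (y := (j', q)) (Or.inr ⟨rfl, hpq⟩) hp hq
    simpa [lexLe] using this
  have hne : a ≠ b := by
    rintro rfl
    have := hinj h1 h2
    simp at this
  have hab := hle (by omega) h1 h2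
  have hb : b ≠ a + 1 := fun hb => hbad ⟨a, b, h1, h2, hb⟩
  rcases le_or_gt m l with h | h
  · have := hle h hm h1
    omega
  · have := hle (show l + 1 ≤ m by omega) h2 hm
    omega

/-- Characterization of the elements of `IO_∞(ℤ^n_lex)` among the injective monotone
first-coordinate-preserving partial selfmaps of `L_n ×_lex ℤ`: cofiniteness of domain
and image is equivalent to being an eventual translation on each end of every line;
moreover such a map is a unit iff it is everywhere defined and a translation on
every line. -/
theorem stmt8 (n : ℕ) (hn : 0 < n) (f : Fin n × ℤ → Option (Fin n × ℤ))
    (hinj : PInj f) (hmono : PMono (lexLe n) f)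
    (hpres : ∀ (i j : Fin n) (k m : ℤ), f (i, k) = some (j, m) → j = i) :
    ((DomCof f ∧ RanCof f) ↔
      ∃ d u : ℤ, ∀ i : Fin n,
        (∀ k : ℤ, k ≤ d →
          ∃ a b : ℤ, f (i, k - 1) = some (i, a) ∧ f (i, k) = some (i, b) ∧ a = b - 1) ∧
        (∀ l : ℤ, u ≤ l →
          ∃ a b : ℤ, f (i, l) = some (i, a) ∧ f (i, l + 1) = some (i, b) ∧ b = a + 1)) ∧
    ((pdom f = Set.univ ∧ pran f = Set.univ) ↔
      ∀ (i : Fin n) (m : ℤ),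
        ∃ a b : ℤ, f (i, m) = some (i, a) ∧ f (i, m + 1) = some (i, b) ∧ b = a + 1) := by
  have hgap := gap f hinj hmono hpres
  refine ⟨⟨?_, ?_⟩, ⟨?_, ?_⟩⟩
  · rintro ⟨hd, hr⟩
    have hB : {p : Fin n × ℤ | ¬ ∃ a b : ℤ, f (p.1, p.2) = some (p.1, a) ∧
        f (p.1, p.2 + 1) = some (p.1, b) ∧ b = a + 1}.Finite := by
      have f2 : {p : Fin n × ℤ | f (p.1, p.2 + 1) = none}.Finite := by
        refine (Set.Finite.preimage (f := fun p : Fin n × ℤ => (p.1, p.2 + 1)) ?_ hd)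
        rintro ⟨a, b⟩ - ⟨c, d⟩ - h
        simpa using h
      have f3 : {p : Fin n × ℤ | ∃ a : ℤ, f p = some (p.1, a) ∧
          ∀ x, f x ≠ some (p.1, a + 1)}.Finite := by
        refine Set.Finite.of_finite_image (f := fun p => (f p).map (fun q => (q.1, q.2 + 1))) ?_ ?_
        · refine (hr.image some).subset ?_
          rintro _ ⟨p, ⟨a, h1, h2⟩, rfl⟩
          exact ⟨(p.1, a + 1), h2, by simp [h1]⟩
        · rintro p ⟨a, h1, -⟩ q ⟨b, h2, -⟩ h
          simp only [h1, h2, Option.map_some, Option.some.injEq, Prod.mk.injEq] at h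
          obtain ⟨e1, e2⟩ := h
          have e3 : a = b := by omega
          rw [← e1, ← e3] at h2
          exact hinj h1 h2
      refine ((hd.union f2).union f3).subset ?_
      rintro ⟨i, l⟩ hp
      rcases hgap i l hp with h | h | h
      · exact Or.inl (Or.inl h)
      · exact Or.inl (Or.inr h)
      · exact Or.inr h
    have hI := hB.image Prod.snd
    obtain ⟨lo, hlo⟩ := hI.bddBelow
    obtain ⟨up, hup⟩ := hI.bddAbove
    refine ⟨lo, up + 1, fun i => ⟨fun k hk => ?_, fun l hl => ?_⟩⟩
    · by_contra hc
      have : lo ≤ k - 1 := by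
        refine hlo ⟨(i, k - 1), ?_, rfl⟩
        rintro ⟨a, b, h1, h2, h3⟩
        simp only [sub_add_cancel] at h1 h2
        exact hc ⟨a, b, h1, h2, by omega⟩
      omega
    · by_contra hc
      have : l ≤ up := hup ⟨(i, l), hc, rfl⟩
      omega
  · rintro ⟨d, u, h⟩
    choose A hA using fun i => line_up f i u (h i).2
    choose B hB using fun i => line_down f i d (h i).1
    constructor
    · refine (Set.finite_univ.prod (Set.finite_Icc d u)).subset ?_
      rintro ⟨i, k⟩ hk
      have hk : f (i, k) = none := hk
      refine ⟨trivial, ?_, ?_⟩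
      · by_contra hc
        obtain ⟨a, b, -, h1, -⟩ := (h i).1 k (le_of_not_ge hc)
        simp [h1] at hk
      · by_contra hc
        obtain ⟨a, b, h1, -, -⟩ := (h i).2 k (le_of_not_ge hc)
        simp [h1] at hk
    · refine (Set.finite_iUnion fun i : Fin n =>
        (Set.finite_Icc (B i) (A i)).image (Prod.mk i)).subset ?_
      rintro ⟨i, k⟩ hk
      refine Set.mem_iUnion.2 ⟨i, k, ⟨?_, ?_⟩, rfl⟩
      · by_contra hc
        have := hB i (B i - k).toNat
        rw [Int.toNat_of_nonneg (by omega), sub_sub_cancel] at this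
        exact hk _ this
      · by_contra hc
        have := hA i (k - A i).toNat
        rw [Int.toNat_of_nonneg (by omega), add_sub_cancel] at this
        exact hk _ this
  · rintro ⟨hd, hr⟩ i m
    by_contra hc
    have hdom : ∀ x, f x ≠ none := by
      intro x hx
      have : x ∈ pdom f := hd ▸ trivial
      obtain ⟨y, hy⟩ := this
      simp [hx] at hy
    rcases hgap i m hc with h | h | ⟨a, -, h⟩
    · exact hdom _ h
    · exact hdom _ h
    · have : (i, a + 1) ∈ pran f := hr ▸ trivial
      obtain ⟨y, hy⟩ := this
      exact h _ hy
  · intro h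
    constructor
    · refine Set.eq_univ_of_forall ?_
      rintro ⟨i, m⟩
      obtain ⟨a, b, h1, -, -⟩ := h i m
      exact ⟨_, h1⟩
    · refine Set.eq_univ_of_forall ?_
      rintro ⟨i, k⟩
      obtain ⟨A, hA⟩ := line_up f i 0 (fun l _ => h i l)
      obtain ⟨B, hB⟩ := line_down f i 0 (fun k _ => by
        obtain ⟨a, b, h1, h2, h3⟩ := h i (k - 1)
        rw [sub_add_cancel] at h2
        exact ⟨a, b, h1, h2, by omega⟩)
      have hAB : A = B := by
        have h1 := hA 0
        have h2 := hB 0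
        simp only [Nat.cast_zero, add_zero, sub_zero] at h1 h2
        rw [h1] at h2
        simpa using h2
      rcases le_total A k with hk | hk
      · have := hA (k - A).toNat
        rw [Int.toNat_of_nonneg (by omega), add_sub_cancel] at this
        exact ⟨_, this⟩
      · have := hB (B - k).toNat
        rw [Int.toNat_of_nonneg (by omega), sub_sub_cancel] at this
        exact ⟨_, this⟩
end

section
/- For every positive integer n, the group of units of the monoid IO_∞(ℤ^n_lex) — that is, the group of all order automorphisms of L_n ×_lex ℤ under composition — is isomorphic to the direct power (ℤ(+))^n of the additive group of integers. -/
theorem lex_covBy {n : ℕ} (p : Fin n ×ₗ ℤ) :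
    p ⋖ toLex ((ofLex p).1, (ofLex p).2 + 1) := by
  constructor
  · rw [Prod.Lex.lt_iff]; right; simp
  · intro c h1 h2
    rw [Prod.Lex.lt_iff] at h1 h2
    simp only [ofLex_toLex] at h1 h2
    rcases h1 with h1 | ⟨h1, h1'⟩ <;> rcases h2 with h2 | ⟨h2, h2'⟩
    · exact absurd h1 (not_lt.2 h2.le)
    · rw [h2] at h1; exact lt_irrefl _ h1
    · rw [h1] at h2; exact lt_irrefl _ h2
    · omega

theorem lex_step {n : ℕ} (f : (Fin n ×ₗ ℤ) ≃o (Fin n ×ₗ ℤ)) (i : Fin n) (m : ℤ) :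
    f (toLex (i, m + 1)) =
      toLex ((ofLex (f (toLex (i, m)))).1, (ofLex (f (toLex (i, m)))).2 + 1) := by
  have h := (apply_covBy_apply_iff f).2 (lex_covBy (toLex (i, m)))
  exact h.unique_right (lex_covBy _)

theorem lex_form {n : ℕ} (f : (Fin n ×ₗ ℤ) ≃o (Fin n ×ₗ ℤ)) (i : Fin n) (m : ℤ) :
    f (toLex (i, m)) =
      toLex ((ofLex (f (toLex (i, 0)))).1, (ofLex (f (toLex (i, 0)))).2 + m) := by
  induction m using Int.induction_on with
  | zero => simp
  | succ k ih => rw [lex_step, ih]; simp [add_assoc]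
  | pred k ih =>
    have h := lex_step f i (-(k : ℤ) - 1)
    rw [sub_add_cancel, ih] at h
    have h' := congrArg ofLex h
    simp only [ofLex_toLex, Prod.mk.injEq] at h'
    apply ofLex.injective
    refine Prod.ext ?_ ?_
    · simp [h'.1]
    · simp only [ofLex_toLex]; omega

theorem lex_fst_symm {n : ℕ} (f : (Fin n ×ₗ ℤ) ≃o (Fin n ×ₗ ℤ)) (i : Fin n) :
    (ofLex (f.symm (toLex ((ofLex (f (toLex (i, 0)))).1, 0)))).1 = i := by
  have h := lex_form f.symm (ofLex (f (toLex (i, 0)))).1 (ofLex (f (toLex (i, 0)))).2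
  have h2 : f.symm (toLex ((ofLex (f (toLex (i, 0)))).1, (ofLex (f (toLex (i, 0)))).2))
      = toLex (i, 0) := by
    exact f.symm_apply_apply _
  rw [h2] at h
  have h' := congrArg ofLex h
  simp only [ofLex_toLex, Prod.mk.injEq] at h'
  exact h'.1.symm

theorem lex_fst_mono {n : ℕ} (f : (Fin n ×ₗ ℤ) ≃o (Fin n ×ₗ ℤ)) :
    Monotone fun i => (ofLex (f (toLex (i, 0)))).1 := by
  intro i j h
  have h1 : toLex (i, (0 : ℤ)) ≤ toLex (j, 0) := by
    rw [Prod.Lex.le_iff]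
    rcases h.lt_or_eq with h | h
    · left; exact h
    · right; simp [h]
  have h2 := f.monotone h1
  rw [Prod.Lex.le_iff] at h2
  rcases h2 with h2 | h2
  · exact h2.le
  · exact h2.1.le

theorem lex_fst {n : ℕ} (f : (Fin n ×ₗ ℤ) ≃o (Fin n ×ₗ ℤ)) (i : Fin n) :
    (ofLex (f (toLex (i, 0)))).1 = i := by
  let e : Fin n ≃ Fin n :=
    { toFun := fun i => (ofLex (f (toLex (i, 0)))).1
      invFun := fun i => (ofLex (f.symm (toLex (i, 0)))).1
      left_inv := lex_fst_symm f
      right_inv := lex_fst_symm f.symm }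
  let o : Fin n ≃o Fin n := e.toOrderIso (lex_fst_mono f) (lex_fst_mono f.symm)
  have : o = OrderIso.refl _ := Subsingleton.elim _ _
  exact congrArg (fun o : Fin n ≃o Fin n => o i) this

theorem lex_form' {n : ℕ} (f : (Fin n ×ₗ ℤ) ≃o (Fin n ×ₗ ℤ)) (i : Fin n) (m : ℤ) :
    f (toLex (i, m)) = toLex (i, (ofLex (f (toLex (i, 0)))).2 + m) := by
  rw [lex_form, lex_fst]

/-- Blockwise translation. -/
noncomputable def lexShift {n : ℕ} (c : Fin n → ℤ) : (Fin n ×ₗ ℤ) ≃o (Fin n ×ₗ ℤ) :=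
  Equiv.toOrderIso
    { toFun := fun p => toLex ((ofLex p).1, c (ofLex p).1 + (ofLex p).2)
      invFun := fun p => toLex ((ofLex p).1, - c (ofLex p).1 + (ofLex p).2)
      left_inv := fun p => by simp
      right_inv := fun p => by simp }
    (by
      intro p q h
      rw [Prod.Lex.le_iff] at h
      rw [Prod.Lex.le_iff]
      rcases h with h | ⟨h, h'⟩
      · left; exact h
      · right; exact ⟨h, by simpa [h] using h'⟩)
    (by
      intro p q h
      rw [Prod.Lex.le_iff] at h
      rw [Prod.Lex.le_iff]
      rcases h with h | ⟨h, h'⟩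
      · left; exact h
      · right; exact ⟨h, by simpa [h] using h'⟩)

theorem lexShift_apply {n : ℕ} (c : Fin n → ℤ) (i : Fin n) (m : ℤ) :
    lexShift c (toLex (i, m)) = toLex (i, c i + m) := rfl

/-- The group of units of `IO_∞(ℤ^n_lex)` — the group of all order automorphisms of
`L_n ×_lex ℤ` under composition — is isomorphic to the direct power `(ℤ(+))^n`. -/
theorem stmt9 (n : ℕ) (hn : 0 < n) :
    ∃ e : ((Fin n ×ₗ ℤ) ≃o (Fin n ×ₗ ℤ)) ≃ (Fin n → ℤ),
      ∀ f g : (Fin n ×ₗ ℤ) ≃o (Fin n ×ₗ ℤ), e (f.trans g) = e f + e g := by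
  refine ⟨{ toFun := fun f i => (ofLex (f (toLex (i, 0)))).2
            invFun := lexShift
            left_inv := ?_
            right_inv := ?_ }, ?_⟩
  · intro f
    apply OrderIso.ext
    funext p
    exact (lex_form' f (ofLex p).1 (ofLex p).2).symm
  · intro c
    funext i
    simp [lexShift_apply]
  · intro f g
    funext i
    change (ofLex (g (f (toLex (i, 0))))).2 =
      (ofLex (f (toLex (i, 0)))).2 + (ofLex (g (toLex (i, 0)))).2
    rw [lex_form' f i 0, lex_form' g]
    simp [add_comm]
end

section
/- Let n be a positive integer. Every maximal subgroup of IO_∞(ℤ^n_lex) is isomorphic to the direct power (ℤ(+))^n; concretely, for every cofinite subset A of L_n ×_lex ℤ, the group {α ∈ IO_∞(ℤ^n_lex) : dom α = ran α = A} under composition (the H-class of the idempotent id_A, i.e., the group of order automorphisms of A with the induced order) is isomorphic to (ℤ(+))^n. -/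
/-- The `H`-class of the idempotent `id_A` of `IO_∞(ℤ^n_lex)`, for a cofinite
subset `A` of `L_n ×_lex ℤ`: the maximal subgroup of all elements with domain and
range equal to `A`. -/
def Hclass (n : ℕ) (A : Set (Fin n × ℤ)) :=
  {f : Fin n × ℤ → Option (Fin n × ℤ) // IOmap (lexLe n) f ∧ pdom f = A ∧ pran f = A}

/-- A cofinite set of integers is the range of a strictly monotone map. -/
theorem cof_enum (S : Set ℤ) (hS : Sᶜ.Finite) :
    ∃ φ : ℤ → ℤ, StrictMono φ ∧ Set.range φ = S := by
  classical
  have hup : ∀ a : ℤ, ∃ b ∈ S, a < b := by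
    intro a
    have h1 : (Set.Ioi a \ Sᶜ).Infinite := (Set.Ioi_infinite a).sdiff hS
    obtain ⟨b, hb⟩ := h1.nonempty
    exact ⟨b, by simpa using hb.2, hb.1⟩
  have hdn : ∀ a : ℤ, ∃ b ∈ S, b < a := by
    intro a
    have h1 : (Set.Iio a \ Sᶜ).Infinite := (Set.Iio_infinite a).sdiff hS
    obtain ⟨b, hb⟩ := h1.nonempty
    exact ⟨b, by simpa using hb.2, hb.1⟩
  have : Nonempty S := by
    obtain ⟨b, hb, _⟩ := hup 0
    exact ⟨⟨b, hb⟩⟩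
  have : NoMaxOrder S := ⟨fun a => by
    obtain ⟨b, hb, h⟩ := hup a.1
    exact ⟨⟨b, hb⟩, h⟩⟩
  have : NoMinOrder S := ⟨fun a => by
    obtain ⟨b, hb, h⟩ := hdn a.1
    exact ⟨⟨b, hb⟩, h⟩⟩
  let : LocallyFiniteOrder S := inferInstanceAs (LocallyFiniteOrder {x // x ∈ S})
  let : SuccOrder S := LinearLocallyFiniteOrder.succOrder S
  let : PredOrder S := LinearLocallyFiniteOrder.predOrder S
  let e : S ≃o ℤ := orderIsoIntOfLinearSuccPredArch
  refine ⟨fun k => (e.symm k).1, fun a b h => ?_, ?_⟩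
  · exact e.symm.strictMono h
  · ext x
    constructor
    · rintro ⟨k, rfl⟩
      exact (e.symm k).2
    · intro hx
      exact ⟨e ⟨x, hx⟩, by simp⟩

/-- Monotone bijections of the lexicographic product are coordinatewise translations. -/
theorem auto_shift (n : ℕ) (F : Fin n × ℤ → Fin n × ℤ) (hb : Function.Bijective F)
    (hm : ∀ p q, lexLe n p q → lexLe n (F p) (F q)) :
    ∃ c : Fin n → ℤ, ∀ p, F p = (p.1, p.2 + c p.1) := by
  have anti : ∀ p q, lexLe n p q → lexLe n q p → p = q := by
    rintro ⟨i, k⟩ ⟨j, m⟩ h1 h2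
    simp only [lexLe, Prod.mk.injEq] at *
    omega
  have tot : ∀ p q, ¬ lexLe n p q → lexLe n q p := by
    rintro ⟨i, k⟩ ⟨j, m⟩ h1
    simp only [lexLe] at *
    omega
  have succ : ∀ i k, F (i, k+1) = ((F (i,k)).1, (F (i,k)).2 + 1) := by
    intro i k
    obtain ⟨q, hq⟩ := hb.2 ((F (i,k)).1, (F (i,k)).2 + 1)
    have h1 : ¬ lexLe n q (i,k) := by
      intro h
      have := hm _ _ h
      rw [hq] at this
      simp only [lexLe] at this
      omega
    have h2 : lexLe n (i,k+1) q := by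
      obtain ⟨j, m⟩ := q
      simp only [lexLe] at *
      omega
    have h3 := hm _ _ h2
    rw [hq] at h3
    have h4 : ¬ lexLe n (F (i,k+1)) (F (i,k)) := by
      intro h
      have h5 := hm (i,k) (i,k+1) (by simp [lexLe])
      have h6 := hb.1 (anti _ _ h h5)
      simp at h6
    apply anti _ _ h3
    generalize F (i,k+1) = a at *
    generalize F (i,k) = b at *
    simp only [lexLe] at *
    omega
  have form : ∀ i k, F (i,k) = ((F (i,0)).1, k + (F (i,0)).2) := by
    intro i k
    induction k using Int.induction_on with
    | zero => simp
    | succ k ih => rw [succ, ih]; ext <;> simp; ring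
    | pred k ih =>
      have h := succ i (-(k:ℤ) - 1)
      rw [sub_add_cancel, ih] at h
      rw [Prod.mk.injEq] at h
      ext
      · rw [← h.1]
      · simp only; linarith [h.2]
  have hmono : Monotone (fun i => (F (i,0)).1) := by
    intro i j hij
    have := hm (i,0) (j,0) (by simp only [lexLe]; omega)
    simp only [lexLe] at this
    show (F (i,0)).1 ≤ (F (j,0)).1
    omega
  have hsurj : Function.Surjective (fun i => (F (i,0)).1) := by
    intro j
    obtain ⟨⟨i, k⟩, h⟩ := hb.2 (j, 0)
    refine ⟨i, ?_⟩
    rw [form] at h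
    exact (Prod.mk.inj h).1
  have hinj := Finite.injective_iff_surjective.2 hsurj
  have hst := hmono.strictMono_of_injective hinj
  have hid : (fun i => (F (i,0)).1) = id := by
    refine (StrictMono.range_inj hst strictMono_id).1 ?_
    rw [hsurj.range_eq]; simp
  refine ⟨fun i => (F (i,0)).2, ?_⟩
  rintro ⟨i, k⟩
  rw [form, show (F (i,0)).1 = i from congrFun hid i]

theorem stmt10 (n : ℕ) (hn : 0 < n) (A : Set (Fin n × ℤ)) (hA : Aᶜ.Finite) :
    ∃ e : Hclass n A ≃ (Fin n → ℤ),
      ∀ f g : Hclass n A,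
        ∃ h : IOmap (lexLe n) (PComp f.1 g.1) ∧ pdom (PComp f.1 g.1) = A ∧
              pran (PComp f.1 g.1) = A,
          e ⟨PComp f.1 g.1, h⟩ = e f + e g := by
  classical
  have hen : ∀ i : Fin n, ∃ φ : ℤ → ℤ, StrictMono φ ∧ Set.range φ = {m | (i, m) ∈ A} := by
    intro i
    apply cof_enum
    exact hA.preimage (f := fun m => (i, m)) (fun a _ b _ h => (Prod.mk.inj h).2)
  choose φ hφ hr using hen
  obtain ⟨P, hP⟩ : ∃ P : Fin n × ℤ → Fin n × ℤ, P = fun p => (p.1, φ p.1 p.2) := ⟨_, rfl⟩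
  have Pinj : Function.Injective P := by
    rintro ⟨i, k⟩ ⟨j, m⟩ h
    simp only [hP, Prod.mk.injEq] at h
    obtain ⟨rfl, h⟩ := h
    rw [(hφ i).injective h]
  have PA : ∀ p, P p ∈ A := by
    rintro ⟨i, k⟩
    have : φ i k ∈ Set.range (φ i) := ⟨k, rfl⟩
    rw [hr] at this
    rw [hP]; exact this
  have Psurj : ∀ x ∈ A, ∃ p, P p = x := by
    rintro ⟨i, m⟩ h
    have : m ∈ Set.range (φ i) := by rw [hr]; exact h
    obtain ⟨k, hk⟩ := this
    exact ⟨(i, k), by rw [hP]; simp [hk]⟩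
  have Ple : ∀ p q, lexLe n (P p) (P q) ↔ lexLe n p q := by
    rintro ⟨i, k⟩ ⟨j, m⟩
    simp only [hP, lexLe]
    refine or_congr Iff.rfl (and_congr_right ?_)
    rintro rfl
    exact (hφ i).le_iff_le
  obtain ⟨T, hT⟩ : ∃ T : (Fin n → ℤ) → Fin n × ℤ → Option (Fin n × ℤ),
      ∀ c, (∀ p, T c (P p) = some (P (p.1, p.2 + c p.1))) ∧ ∀ x ∉ A, T c x = none := by
    have : Nonempty (Fin n × ℤ) := ⟨(⟨0, hn⟩, 0)⟩
    refine ⟨fun c x => if x ∈ A then some (P ((Function.invFun P x).1,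
      (Function.invFun P x).2 + c (Function.invFun P x).1)) else none, fun c => ⟨fun p => ?_, ?_⟩⟩
    · simp [PA, Function.leftInverse_invFun Pinj p]
    · intro x hx; simp [hx]
  have hT1 := fun c => (hT c).1
  have hT2 := fun c => (hT c).2
  have hTs : ∀ c x y, T c x = some y → ∃ p, x = P p ∧ y = P (p.1, p.2 + c p.1) := by
    intro c x y h
    by_cases hx : x ∈ A
    · obtain ⟨p, rfl⟩ := Psurj x hx
      rw [hT1] at h
      exact ⟨p, rfl, (Option.some.inj h).symm⟩
    · rw [hT2 c x hx] at h; simp at h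
  have hTH : ∀ c, IOmap (lexLe n) (T c) ∧ pdom (T c) = A ∧ pran (T c) = A := by
    intro c
    have hd : pdom (T c) = A := by
      ext x
      constructor
      · rintro ⟨y, hy⟩
        obtain ⟨p, rfl, _⟩ := hTs c x y hy
        exact PA p
      · intro hx
        obtain ⟨p, rfl⟩ := Psurj x hx
        exact ⟨_, hT1 c p⟩
    have hrn : pran (T c) = A := by
      ext y
      constructor
      · rintro ⟨x, hy⟩
        obtain ⟨p, _, rfl⟩ := hTs c x y hy
        exact PA _
      · intro hx
        obtain ⟨p, rfl⟩ := Psurj y hx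
        exact ⟨P (p.1, p.2 - c p.1), by rw [hT1]; simp⟩
    refine ⟨⟨?_, ?_, ?_, ?_⟩, hd, hrn⟩
    · intro x y a hx hy
      obtain ⟨p, rfl, rfl⟩ := hTs c x a hx
      obtain ⟨q, rfl, h⟩ := hTs c y _ hy
      have h := Pinj h
      rw [Prod.mk.injEq] at h
      obtain ⟨h1, h2⟩ := h
      rw [h1] at h2
      congr 1
      ext
      · rw [h1]
      · linarith
    · intro x y a b hxy hx hy
      obtain ⟨p, rfl, rfl⟩ := hTs c x a hx
      obtain ⟨q, rfl, rfl⟩ := hTs c y b hy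
      rw [Ple] at *
      rcases hxy with h | ⟨h, hle⟩
      · exact Or.inl h
      · exact Or.inr ⟨h, by simp only [h]; linarith⟩
    · refine hA.subset fun x hx hxA => ?_
      rw [← hd] at hxA
      obtain ⟨y, hy⟩ := hxA
      have hx : T c x = none := hx
      rw [hy] at hx
      simp at hx
    · refine hA.subset fun y hy hyA => ?_
      rw [← hrn] at hyA
      obtain ⟨x, hx⟩ := hyA
      exact hy x hx
  have hcomp : ∀ c d, PComp (T c) (T d) = T (c + d) := by
    intro c d
    funext x
    by_cases hx : x ∈ A
    · obtain ⟨p, rfl⟩ := Psurj x hx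
      simp [PComp, hT1, add_assoc]
    · simp [PComp, hT2 _ x hx]
  let E : (Fin n → ℤ) → Hclass n A := fun c => ⟨T c, hTH c⟩
  have hE : Function.Bijective E := by
    constructor
    · intro c d h
      have h : T c = T d := congrArg Subtype.val h
      funext i
      have h1 := congrFun h (P (i, 0))
      rw [hT1, hT1] at h1
      have h2 := Pinj (Option.some.inj h1)
      simpa using h2
    · rintro ⟨f, ⟨hi, hm, -, -⟩, hd, hrn⟩
      have hF : ∀ p, ∃ q, f (P p) = some (P q) := by
        intro p
        have : P p ∈ pdom f := by rw [hd]; exact PA p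
        obtain ⟨y, hy⟩ := this
        have hyA : y ∈ A := by rw [← hrn]; exact ⟨_, hy⟩
        obtain ⟨q, rfl⟩ := Psurj y hyA
        exact ⟨q, hy⟩
      choose F hF using hF
      have hex : ∃ c : Fin n → ℤ, ∀ p, F p = (p.1, p.2 + c p.1) := by
        refine auto_shift n F ⟨?_, ?_⟩ ?_
        · intro p q h
          have h1 := hF p
          rw [h] at h1
          exact Pinj (hi h1 (hF q))
        · intro q
          have : P q ∈ pran f := by rw [hrn]; exact PA q
          obtain ⟨x, hx⟩ := this
          have hxA : x ∈ A := by rw [← hd]; exact ⟨_, hx⟩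
          obtain ⟨p, rfl⟩ := Psurj x hxA
          rw [hF] at hx
          exact ⟨p, Pinj (Option.some.inj hx)⟩
        · intro p q h
          exact (Ple _ _).1 (hm ((Ple _ _).2 h) (hF p) (hF q))
      obtain ⟨c, hc⟩ := hex
      · refine ⟨c, Subtype.ext ?_⟩
        funext x
        show T c x = f x
        by_cases hx : x ∈ A
        · obtain ⟨p, rfl⟩ := Psurj x hx
          rw [hT1, hF, hc]
        · rw [hT2 c x hx]
          rw [← hd] at hx
          cases h : f x with
          | none => rfl
          | some y => exact absurd ⟨y, h⟩ hx
  refine ⟨(Equiv.ofBijective E hE).symm, fun f g => ?_⟩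
  obtain ⟨c, rfl⟩ := hE.2 f
  obtain ⟨d, rfl⟩ := hE.2 g
  refine ⟨by show _ ∧ pdom (PComp (T c) (T d)) = A ∧ pran (PComp (T c) (T d)) = A
             rw [show (E c).1 = T c from rfl, show (E d).1 = T d from rfl, hcomp]; exact hTH _, ?_⟩
  have h1 : ∀ c, (Equiv.ofBijective E hE).symm (E c) = c := fun c =>
    (Equiv.ofBijective E hE).symm_apply_apply c
  refine (Equiv.symm_apply_eq _).2 ?_
  refine Eq.trans (b := E (c + d)) (Subtype.ext (hcomp c d)) ?_
  show E (c + d) = E _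
  exact congrArg E (congrArg₂ (· + ·) (h1 c) (h1 d)).symm
end

section
/- Let n be a positive integer. For all α, β ∈ IO_∞(ℤ^n_lex), both of the sets {χ ∈ IO_∞(ℤ^n_lex) : α·χ = β} and {χ ∈ IO_∞(ℤ^n_lex) : χ·α = β} are finite. -/
theorem fin_aux {X Y : Type*} (S : Set (X → Y)) (F : Set X) (hF : F.Finite) (V : Set Y)
    (hV : V.Finite) (h1 : ∀ x, x ∉ F → ∀ a ∈ S, ∀ b ∈ S, a x = b x)
    (h2 : ∀ x ∈ F, ∀ a ∈ S, a x ∈ V) : S.Finite := by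
  haveI : Finite F := hF
  have hfin : (Set.pi Set.univ (fun _ : F => V)).Finite := Set.Finite.pi' (fun _ => hV) |>.subset
    (fun u hu i => hu i (Set.mem_univ i))
  refine Set.Finite.of_finite_image (f := fun (a : X → Y) (x : F) => a x) (hfin.subset ?_) ?_
  · rintro _ ⟨a, ha, rfl⟩ x _
    exact h2 x x.2 a ha
  · intro a ha b hb hab
    funext x
    by_cases hx : x ∈ F
    · exact congrFun hab ⟨x, hx⟩
    · exact h1 x hx a ha b hb

/-- For all `α, β ∈ IO_∞(ℤ^n_lex)`, the sets of solutions `χ` of `α·χ = β` and of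
`χ·α = β` in `IO_∞(ℤ^n_lex)` are finite. -/
theorem stmt11 (n : ℕ) (hn : 0 < n) (f g : Fin n × ℤ → Option (Fin n × ℤ))
    (hf : IOmap (lexLe n) f) (hg : IOmap (lexLe n) g) :
    {χ : Fin n × ℤ → Option (Fin n × ℤ) | IOmap (lexLe n) χ ∧ PComp f χ = g}.Finite ∧
    {χ : Fin n × ℤ → Option (Fin n × ℤ) | IOmap (lexLe n) χ ∧ PComp χ f = g}.Finite := by
  obtain ⟨fi, -, fd, fr⟩ := hf
  obtain ⟨-, -, gd, gr⟩ := hg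
  constructor
  · refine fin_aux _ _ fr (insert none (Set.image some {y | ∀ x, g x ≠ some y}))
      ((gr.image _).insert _) ?_ ?_
    · intro y hy a ha b hb
      simp only [Set.mem_setOf_eq, not_forall, not_not] at hy
      obtain ⟨x, hx⟩ := hy
      have h1 := congrFun ha.2 x
      have h2 := congrFun hb.2 x
      simp only [PComp, hx, Option.bind_some] at h1 h2
      rw [h1, h2]
    · intro y hy a ha
      cases hay : a y with
      | none => exact Set.mem_insert _ _
      | some z =>
        refine Set.mem_insert_of_mem _ ⟨z, ?_, rfl⟩
        intro x hx
        have h1 := congrFun ha.2 x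
        rw [hx] at h1
        obtain ⟨w, hw, hwz⟩ := Option.bind_eq_some_iff.1 h1
        have := ha.1.1 hwz hay
        subst this
        exact hy x hw
  · refine fin_aux _ _ gd (insert none (Set.image some {y | f y = none}))
      ((fd.image _).insert _) ?_ ?_
    · intro x hx a ha b hb
      obtain ⟨z, hz⟩ := Option.ne_none_iff_exists'.1 hx
      have h1 := congrFun ha.2 x
      have h2 := congrFun hb.2 x
      rw [hz] at h1 h2
      obtain ⟨u, hu, huz⟩ := Option.bind_eq_some_iff.1 h1
      obtain ⟨v, hv, hvz⟩ := Option.bind_eq_some_iff.1 h2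
      rw [hu, hv, fi huz hvz]
    · intro x hx a ha
      cases hax : a x with
      | none => exact Set.mem_insert _ _
      | some z =>
        refine Set.mem_insert_of_mem _ ⟨z, ?_, rfl⟩
        have h1 := congrFun ha.2 x
        simp only [PComp, hax, Option.bind_some] at h1
        exact h1.trans hx
end

section
/- Let n be a positive integer and α, β ∈ IO_∞(ℤ^n_lex). The following are equivalent: (1) there exists an idempotent ε ∈ IO_∞(ℤ^n_lex) such that α·ε = β·ε (i.e., α and β are equivalent under the least group congruence σ on the inverse semigroup IO_∞(ℤ^n_lex)); (2) there exist integers d and u such that for every i ∈ {1,…,n} and every integer k with k ≤ d or k ≥ u, (i,k) ∈ dom α, (i,k) ∈ dom β and α(i,k) = β(i,k). -/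
/-- Two elements of `IO_∞(ℤ^n_lex)` are equivalent under the least group congruence `σ`
(`α σ β` iff `α·ε = β·ε` for some idempotent `ε`) iff they are defined and agree on
`(i,k)` for all sufficiently small and all sufficiently large `k`. -/
theorem stmt12 (n : ℕ) (hn : 0 < n) (f g : Fin n × ℤ → Option (Fin n × ℤ))
    (hf : IOmap (lexLe n) f) (hg : IOmap (lexLe n) g) :
    (∃ e, IOmap (lexLe n) e ∧ PComp e e = e ∧ PComp f e = PComp g e) ↔
    ∃ d u : ℤ, ∀ (i : Fin n) (k : ℤ), (k ≤ d ∨ u ≤ k) →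
      ∃ y, f (i, k) = some y ∧ g (i, k) = some y := by
  classical
  obtain ⟨fi, -, fd, -⟩ := hf
  have key : (∃ d u : ℤ, ∀ (i : Fin n) (k : ℤ), (k ≤ d ∨ u ≤ k) →
      ∃ y, f (i, k) = some y ∧ g (i, k) = some y) ↔
      {x | ¬ ∃ y, f x = some y ∧ g x = some y}.Finite := by
    constructor
    · rintro ⟨d, u, h⟩
      refine ((Set.finite_univ (α := Fin n)).prod (Set.finite_Icc d u)).subset ?_
      rintro ⟨i, k⟩ hx
      refine ⟨trivial, ?_, ?_⟩
      · by_contra hc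
        exact hx (h i k (Or.inl (le_of_not_ge hc)))
      · by_contra hc
        exact hx (h i k (Or.inr (le_of_not_ge hc)))
    · intro h
      have h2 := h.image Prod.snd
      obtain ⟨a, ha⟩ := h2.bddBelow
      obtain ⟨b, hb⟩ := h2.bddAbove
      refine ⟨a - 1, b + 1, fun i k hk => ?_⟩
      by_contra hc
      have hm : k ∈ Prod.snd '' {x | ¬ ∃ y, f x = some y ∧ g x = some y} := ⟨(i, k), hc, rfl⟩
      have h3 := ha hm
      have h4 := hb hm
      omega
  rw [key]
  constructor
  · rintro ⟨e, ⟨ei, -, ed, -⟩, hee, hfg⟩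
    have hid : ∀ x y, e x = some y → x = y := by
      intro x y h
      have h1 := congrFun hee x
      simp only [PComp, h, Option.bind_some] at h1
      exact ei h h1
    have hfin : {x | ∃ y, f x = some y ∧ e y = none}.Finite := by
      refine Set.Finite.of_finite_image (f := fun x => (f x).getD x) (ed.subset ?_) ?_
      · rintro _ ⟨x, ⟨y, hy, hy2⟩, rfl⟩
        simpa [hy] using hy2
      · rintro x ⟨y, hy, -⟩ x' ⟨y', hy', -⟩ h
        simp only [hy, hy', Option.getD_some] at h
        subst h
        exact fi hy hy'
    refine (fd.union hfin).subset ?_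
    intro x hx
    by_contra hc
    simp only [Set.mem_union, Set.mem_setOf_eq, not_or] at hc
    obtain ⟨h1, h2⟩ := hc
    obtain ⟨y, hy⟩ := Option.ne_none_iff_exists'.1 h1
    have h3 : e y ≠ none := fun h => h2 ⟨y, hy, h⟩
    obtain ⟨z, hz⟩ := Option.ne_none_iff_exists'.1 h3
    have hyz := hid _ _ hz
    subst hyz
    have h4 := congrFun hfg x
    simp only [PComp, hy, Option.bind_some, hz] at h4
    obtain ⟨w, hw, hw2⟩ := Option.bind_eq_some_iff.1 h4.symm
    have := hid _ _ hw2
    subst this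
    exact hx ⟨_, hy, hw⟩
  · intro hB
    set B := {x | ¬ ∃ y, f x = some y ∧ g x = some y} with hBdef
    let C : Set (Fin n × ℤ) := {y | ∃ x ∈ B, f x = some y ∨ g x = some y}
    have hC : C.Finite := by
      refine ((hB.image (fun x => (f x).getD x)).union
        (hB.image (fun x => (g x).getD x))).subset ?_
      rintro y ⟨x, hx, h | h⟩
      · exact Or.inl ⟨x, hx, by simp [h]⟩
      · exact Or.inr ⟨x, hx, by simp [h]⟩
    let e : Fin n × ℤ → Option (Fin n × ℤ) := fun x => if x ∈ C then none else some x
    have he : ∀ x y, e x = some y → x ∉ C ∧ x = y := by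
      intro x y h
      by_cases hx : x ∈ C
      · simp [e, hx] at h
      · simp only [e, hx, if_false, Option.some.injEq] at h
        exact ⟨hx, h⟩
    have he1 : ∀ x, x ∈ C → e x = none := fun x hx => by simp [e, hx]
    have he2 : ∀ x, x ∉ C → e x = some x := fun x hx => by simp [e, hx]
    refine ⟨e, ⟨?_, ?_, ?_, ?_⟩, ?_, ?_⟩
    · intro x y a h1 h2
      exact (he _ _ h1).2.trans (he _ _ h2).2.symm
    · intro x y a b h h1 h2
      rw [← (he _ _ h1).2, ← (he _ _ h2).2]
      exact h
    · refine hC.subset fun x hx => ?_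
      by_contra hc
      have := he2 x hc
      simp only [Set.mem_setOf_eq] at hx
      simp [hx] at this
    · refine hC.subset fun x hx => ?_
      by_contra hc
      exact hx x (he2 x hc)
    · funext x
      by_cases hx : x ∈ C
      · simp [PComp, he1 x hx]
      · simp [PComp, he2 x hx]
    · funext x
      by_cases hx : x ∈ B
      · have h1 : (f x).bind e = none := by
          rcases h : f x with _ | y
          · rfl
          · exact he1 y ⟨x, hx, Or.inl h⟩
        have h2 : (g x).bind e = none := by
          rcases h : g x with _ | y
          · rfl
          · exact he1 y ⟨x, hx, Or.inr h⟩
        simp only [PComp, h1, h2]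
      · obtain ⟨y, h1, h2⟩ := not_not.1 hx
        simp only [PComp, h1, h2]
end

section
/- Every α ∈ IO_∞(ℤ) can be written as α = β·γ, where β, γ ∈ IO_∞(ℤ), ran β = ℤ and dom γ = ℤ; that is, O^{[0]}_∞(ℤ)·O^0_∞(ℤ) = IO_∞(ℤ), where O^0_∞(ℤ) = {α ∈ IO_∞(ℤ) : dom α = ℤ} and O^{[0]}_∞(ℤ) = {α ∈ IO_∞(ℤ) : ran α = ℤ}. -/
/-- Every cofinite subset of `ℤ` is order isomorphic to `ℤ`. -/
lemma exists_iso_of_cofinite (D : Set ℤ) (hD : Dᶜ.Finite) : Nonempty (D ≃o ℤ) := by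
  classical
  have up : ∀ a : ℤ, ∃ b ∈ D, a < b := by
    intro a
    by_contra! h
    exact Set.Ioi_infinite a (hD.subset fun x hx hxD => not_le.mpr hx (h x hxD))
  have down : ∀ a : ℤ, ∃ b ∈ D, b < a := by
    intro a
    by_contra! h
    exact Set.Iio_infinite a (hD.subset fun x hx hxD => not_le.mpr hx (h x hxD))
  have : Nonempty D := by
    obtain ⟨b, hb, _⟩ := up 0
    exact ⟨⟨b, hb⟩⟩
  have : NoMaxOrder D := ⟨fun a => by
    obtain ⟨b, hb, h⟩ := up a
    exact ⟨⟨b, hb⟩, h⟩⟩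
  have : NoMinOrder D := ⟨fun a => by
    obtain ⟨b, hb, h⟩ := down a
    exact ⟨⟨b, hb⟩, h⟩⟩
  let : LocallyFiniteOrder D := inferInstanceAs (LocallyFiniteOrder {x : ℤ // x ∈ D})
  let : SuccOrder D := LinearLocallyFiniteOrder.succOrder D
  let : PredOrder D := LinearLocallyFiniteOrder.predOrder D
  exact ⟨orderIsoIntOfLinearSuccPredArch⟩

/-- `O^{[0]}_∞(ℤ)·O^0_∞(ℤ) = IO_∞(ℤ)`: every `α ∈ IO_∞(ℤ)` can be written as
`α = β·γ` (with `β` applied first) where `β, γ ∈ IO_∞(ℤ)`, `ran β = ℤ` and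
`dom γ = ℤ`. -/
theorem stmt15 (f : ℤ → Option ℤ) (hf : IOmap (· ≤ · : ℤ → ℤ → Prop) f) :
    ∃ b c : ℤ → Option ℤ, IOmap (· ≤ · : ℤ → ℤ → Prop) b ∧
      IOmap (· ≤ · : ℤ → ℤ → Prop) c ∧
      pran b = Set.univ ∧ pdom c = Set.univ ∧ PComp b c = f := by
  classical
  obtain ⟨hinj, hmono, hdom, hran⟩ := hf
  have hc : ({x | f x ≠ none} : Set ℤ)ᶜ = {x | f x = none} := by ext; simp
  obtain ⟨e⟩ := exists_iso_of_cofinite {x | f x ≠ none} (by rw [hc]; exact hdom)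
  have hb : ∀ x a, (if h : f x ≠ none then some (e ⟨x, h⟩) else none) = some a ↔
      ((e.symm a : {x | f x ≠ none}) : ℤ) = x := by
    intro x a
    constructor
    · intro h
      split_ifs at h with h1
      obtain rfl := Option.some.inj h
      simp
    · rintro rfl
      have h2 : f (e.symm a : {x | f x ≠ none}) ≠ none := (e.symm a).2
      rw [dif_pos h2]
      simp
  refine ⟨fun x => if h : f x ≠ none then some (e ⟨x, h⟩) else none,
    fun y => f (e.symm y : {x | f x ≠ none}), ⟨?_, ?_, ?_, ?_⟩, ⟨?_, ?_, ?_, ?_⟩, ?_, ?_, ?_⟩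
  · intro x y a hx hy
    rw [← (hb x a).1 hx, ← (hb y a).1 hy]
  · intro x y a b' hxy hx hy
    have hx := (hb x a).1 hx
    have hy := (hb y b').1 hy
    subst hx hy
    exact e.symm.le_iff_le.1 hxy
  · refine hdom.subset fun x hx => ?_
    by_contra h
    have hx' : (if h : f x ≠ none then some (e ⟨x, h⟩) else none) = none := hx
    have h2 : f x ≠ none := h
    rw [dif_pos h2] at hx'
    cases hx'
  · exact Set.finite_empty.subset fun y hy => (hy _ ((hb _ y).2 rfl)).elim
  · intro x y a hx hy
    exact e.symm.injective (Subtype.ext (hinj hx hy))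
  · intro x y a b' hxy hx hy
    exact hmono (e.symm.monotone hxy) hx hy
  · exact Set.finite_empty.subset fun y hy => ((e.symm y).2 hy).elim
  · refine hran.subset fun y hy x hx => ?_
    have hne : f x ≠ none := by rw [hx]; simp
    apply hy (e ⟨x, hne⟩)
    simpa using hx
  · exact Set.eq_univ_of_forall fun y => ⟨_, (hb _ y).2 rfl⟩
  · exact Set.eq_univ_of_forall fun y => Option.ne_none_iff_exists'.1 (e.symm y).2
  · funext x
    by_cases h : f x = none
    · simp [PComp, h]
    · simp [PComp, h]
end

section
/- For every integer k, the set {ε_k, ς_1} generates IO_∞(ℤ) as an inverse semigroup: the smallest subset of IO_∞(ℤ) that contains ε_k and ς_1 and is closed under composition of partial maps and under taking the inverse partial map α ↦ α⁻¹ is all of IO_∞(ℤ). Here ε_k : ℤ → ℤ is the everywhere-defined map with ε_k(i) = i + 1 for i > k and ε_k(i) = i for i ≤ k, and ς_1 : ℤ → ℤ is the translation ς_1(i) = i + 1. In particular, IO_∞(ℤ) is finitely generated as an inverse semigroup. -/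
/-- The partial selfmap `ε_k` of `ℤ`: everywhere defined, `i ↦ i + 1` for `i > k`
and `i ↦ i` for `i ≤ k`. -/
def epsZ (k : ℤ) : ℤ → Option ℤ := fun i => some (if k < i then i + 1 else i)

/-- The translation `ς_1 : i ↦ i + 1` of `ℤ`, as a partial selfmap. -/
def sigZ : ℤ → Option ℤ := fun i => some (i + 1)

def eFun (j : ℤ) : ℤ → ℤ := fun i => if j < i then i + 1 else i

def eInv (j : ℤ) : ℤ → Option ℤ := fun y =>
  if y ≤ j then some y else if y = j + 1 then none else some (y - 1)

lemma eFun_inj (j : ℤ) : Function.Injective (eFun j) := by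
  intro a b h
  unfold eFun at h
  split_ifs at h <;> omega

lemma eFun_ne (j x : ℤ) : eFun j x ≠ j + 1 := by
  unfold eFun
  split_ifs <;> omega

lemma eFun_mono (j : ℤ) {x y : ℤ} (h : x ≤ y) : eFun j x ≤ eFun j y := by
  unfold eFun
  split_ifs <;> omega

lemma eFun_surj (j y : ℤ) (h : y ≠ j + 1) : ∃ x, eFun j x = y := by
  unfold eFun
  by_cases h1 : y ≤ j
  · exact ⟨y, by rw [if_neg (by omega)]⟩
  · exact ⟨y - 1, by rw [if_pos (by omega)]; omega⟩

lemma eInv_eq (j x y : ℤ) : epsZ j x = some y ↔ eInv j y = some x := by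
  unfold epsZ eInv
  split_ifs <;> simp <;> omega

lemma epsZ_eq (j x : ℤ) : epsZ j x = some (eFun j x) := rfl

lemma eInv_eFun (j x : ℤ) : eInv j (eFun j x) = some x := (eInv_eq j x _).1 rfl

lemma eInv_self (j : ℤ) : eInv j (j + 1) = none := by simp [eInv]

lemma eInv_some {j x y : ℤ} (h : eInv j y = some x) : y = eFun j x := by
  have := (eInv_eq j x y).2 h
  rw [epsZ_eq] at this
  exact (Option.some.inj this).symm

/-- `{ε_k, ς_1}` generates `IO_∞(ℤ)` as an inverse semigroup: every subset of
`IO_∞(ℤ)` containing `ε_k` and `ς_1` and closed under composition of partial maps and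
under taking the inverse partial map is all of `IO_∞(ℤ)`. In particular `IO_∞(ℤ)` is
finitely generated as an inverse semigroup. -/
theorem stmt16 (k : ℤ) (T : Set (ℤ → Option ℤ))
    (hT : ∀ f ∈ T, IOmap (· ≤ · : ℤ → ℤ → Prop) f)
    (he : epsZ k ∈ T) (hs : sigZ ∈ T)
    (hcomp : ∀ f ∈ T, ∀ g ∈ T, PComp f g ∈ T)
    (hinv : ∀ f ∈ T, ∀ g : ℤ → Option ℤ,
      (∀ x y : ℤ, f x = some y ↔ g y = some x) → g ∈ T) :
    ∀ f : ℤ → Option ℤ, IOmap (· ≤ · : ℤ → ℤ → Prop) f → f ∈ T := by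
  have h1 : (fun x : ℤ => some (x + (-1))) ∈ T := by
    refine hinv _ hs _ (fun x y => ?_)
    simp only [sigZ, Option.some.injEq]
    omega
  have h0 : (fun x : ℤ => some (x + 0)) ∈ T := by
    have := hcomp _ hs _ h1
    convert this using 1
    funext x
    simp [PComp, sigZ]
  have htr : ∀ n : ℤ, (fun x : ℤ => some (x + n)) ∈ T := by
    intro n
    induction n using Int.induction_on with
    | zero => exact h0
    | succ i ih =>
      have := hcomp _ ih _ hs
      convert this using 1
      funext x
      simp [PComp, sigZ, add_assoc]
    | pred i ih =>
      have := hcomp _ ih _ h1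
      convert this using 1
      funext x
      simp only [PComp, Option.bind_some, Option.some.injEq]
      omega
  have heps : ∀ j, epsZ j ∈ T := by
    intro j
    have := hcomp _ (hcomp _ (htr (k - j)) _ he) _ (htr (j - k))
    convert this using 1
    funext x
    simp only [PComp, epsZ, Option.bind_some, Option.some.injEq]
    split_ifs <;> omega
  have heinv : ∀ j, eInv j ∈ T := fun j => hinv _ (heps j) _ (eInv_eq j)
  -- total and surjective maps are translations
  have hbase : ∀ f : ℤ → Option ℤ, IOmap (· ≤ · : ℤ → ℤ → Prop) f →
      (∀ x, f x ≠ none) → (∀ y, ∃ x, f x = some y) → f ∈ T := by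
    intro f hf htot hsur
    have : ∀ x, ∃ y, f x = some y := fun x => Option.ne_none_iff_exists'.1 (htot x)
    choose g hg using this
    have hinj : ∀ x y, g x = g y → x = y := fun x y h =>
      hf.1 (hg x) (by rw [hg y, h])
    have hmono : ∀ x y, x ≤ y → g x ≤ g y := fun x y h => hf.2.1 h (hg x) (hg y)
    have hstep : ∀ x, g (x + 1) = g x + 1 := by
      intro x
      obtain ⟨z, hz⟩ := hsur (g x + 1)
      rw [hg z] at hz
      have hz := Option.some.inj hz
      have a1 : x + 1 ≤ z := by
        by_contra hc
        have := hmono z x (by omega)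
        omega
      have a2 := hmono _ _ a1
      have a3 := hmono x (x + 1) (by omega)
      have a4 : g x ≠ g (x + 1) := fun h => by
        have := hinj _ _ h
        omega
      omega
    have hlin : ∀ x, g x = x + g 0 := by
      intro x
      induction x using Int.induction_on with
      | zero => simp
      | succ i ih => rw [hstep, ih]; omega
      | pred i ih =>
        have := hstep (-(i : ℤ) - 1)
        rw [sub_add_cancel, ih] at this
        omega
    convert htr (g 0) using 1
    funext x
    rw [hg, hlin]
  -- total maps
  have hran : ∀ n : ℕ, ∀ f : ℤ → Option ℤ, IOmap (· ≤ · : ℤ → ℤ → Prop) f →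
      (∀ x, f x ≠ none) → {y | ∀ x, f x ≠ some y}.ncard = n → f ∈ T := by
    intro n
    induction n with
    | zero =>
      intro f hf htot hn
      rw [Set.ncard_eq_zero hf.2.2.2] at hn
      refine hbase f hf htot (fun y => ?_)
      by_contra hc
      have : y ∈ {y | ∀ x, f x ≠ some y} := fun x hx => hc ⟨x, hx⟩
      rw [hn] at this
      exact this
    | succ n ih =>
      intro f hf htot hn
      obtain ⟨y, hy⟩ : {y | ∀ x, f x ≠ some y}.Nonempty := by
        apply Set.nonempty_of_ncard_ne_zero
        omega
      obtain ⟨j, rfl⟩ : ∃ j, y = j + 1 := ⟨y - 1, by omega⟩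
      have hval : ∀ x, ∃ y, f x = some (eFun j y) := by
        intro x
        obtain ⟨z, hz⟩ := Option.ne_none_iff_exists'.1 (htot x)
        obtain ⟨w, rfl⟩ := eFun_surj j z (by rintro rfl; exact hy x hz)
        exact ⟨w, hz⟩
      choose g hg using hval
      have hg' : PComp f (eInv j) = fun x => some (g x) := by
        funext x
        simp [PComp, hg, eInv_eFun]
      have hfe : f = PComp (PComp f (eInv j)) (epsZ j) := by
        rw [hg']
        funext x
        simp [PComp, hg, epsZ_eq]
      have himg : eFun j '' {y | ∀ x, (fun x => some (g x)) x ≠ some y}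
          = {y | ∀ x, f x ≠ some y} \ {j + 1} := by
        ext z
        constructor
        · rintro ⟨w, hw, rfl⟩
          refine ⟨fun x hx => hw x ?_, eFun_ne j w⟩
          rw [hg] at hx
          exact congrArg some (eFun_inj j (Option.some.inj hx))
        · rintro ⟨hz, hne⟩
          obtain ⟨w, rfl⟩ := eFun_surj j z hne
          refine ⟨w, fun x hx => hz x ?_, rfl⟩
          rw [hg, Option.some.inj hx]
      have hcard := Set.ncard_diff_singleton_of_mem hy
      rw [← himg, Set.ncard_image_of_injective _ (eFun_inj j), hn] at hcard
      rw [hfe]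
      refine hcomp _ ?_ _ (heps j)
      rw [hg']
      refine ih _ ⟨?_, ?_, ?_, ?_⟩ (by simp) (by simpa using hcard)
      · intro a b c ha hb
        refine hf.1 (hg a) ?_
        rw [hg b, Option.some.inj ha, Option.some.inj hb]
      · intro a b c d hab ha hb
        have h2 := hf.2.1 hab (hg a) (hg b)
        rw [Option.some.inj ha, Option.some.inj hb] at h2
        by_contra hc
        have hc' : d ≤ c := by
          have := not_le.1 hc
          omega
        have h3 := eFun_inj j (le_antisymm h2 (eFun_mono j hc'))
        exact hc h3.le
      · simp [DomCof]
      · refine Set.Finite.of_finite_image ?_ (eFun_inj j).injOn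
        rw [himg]
        exact hf.2.2.2.diff
  -- all maps
  have hdom : ∀ n : ℕ, ∀ f : ℤ → Option ℤ, IOmap (· ≤ · : ℤ → ℤ → Prop) f →
      {x | f x = none}.ncard = n → f ∈ T := by
    intro n
    induction n with
    | zero =>
      intro f hf hn
      rw [Set.ncard_eq_zero hf.2.2.1] at hn
      refine hran _ f hf (fun y hy => ?_) rfl
      have : y ∈ {x | f x = none} := hy
      rw [hn] at this
      exact this
    | succ n ih =>
      intro f hf hn
      obtain ⟨y, hy⟩ : {x | f x = none}.Nonempty := by
        apply Set.nonempty_of_ncard_ne_zero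
        omega
      obtain ⟨j, rfl⟩ : ∃ j, y = j + 1 := ⟨y - 1, by omega⟩
      have hy' : f (j + 1) = none := hy
      have hg' : PComp (epsZ j) f = fun x => f (eFun j x) := rfl
      have hfe : f = PComp (eInv j) (PComp (epsZ j) f) := by
        rw [hg']
        funext x
        by_cases hx : x = j + 1
        · rw [hx, hy']
          simp [PComp, eInv_self]
        · obtain ⟨w, rfl⟩ := eFun_surj j x hx
          simp [PComp, eInv_eFun]
      have himg : eFun j '' {x | (fun x => f (eFun j x)) x = none}
          = {x | f x = none} \ {j + 1} := by
        ext z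
        constructor
        · rintro ⟨w, hw, rfl⟩
          exact ⟨hw, eFun_ne j w⟩
        · rintro ⟨hz, hne⟩
          obtain ⟨w, rfl⟩ := eFun_surj j z hne
          exact ⟨w, hz, rfl⟩
      have hcard := Set.ncard_diff_singleton_of_mem hy
      rw [← himg, Set.ncard_image_of_injective _ (eFun_inj j), hn] at hcard
      rw [hfe]
      refine hcomp _ (heinv j) _ ?_
      rw [hg']
      refine ih _ ⟨?_, ?_, ?_, ?_⟩ (by simpa using hcard)
      · intro a b c ha hb
        exact eFun_inj j (hf.1 ha hb)
      · intro a b c d hab ha hb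
        exact hf.2.1 (eFun_mono j hab) ha hb
      · refine Set.Finite.of_finite_image ?_ (eFun_inj j).injOn
        rw [himg]
        exact hf.2.2.1.diff
      · refine hf.2.2.2.subset (fun z hz x hx => ?_)
        have hne : x ≠ j + 1 := by
          rintro rfl
          rw [hy'] at hx
          cases hx
        obtain ⟨w, rfl⟩ := eFun_surj j x hne
        exact hz w hx
  exact fun f hf => hdom _ f hf rfl
end
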